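/- arXiv:2603.00752 — 2 statements merged into one kernel-verified Lean document; each statement's English description precedes it below -/
import Mathlib

section
/- Fix n ≥ 6. Let G = A_{n−1} be the anticycle on [n−1], let F be the star on [n] with edges {i, n} for 1 ≤ i ≤ n−3, and let H_n be the graph on [n] with E(H_n) = E(G) ∪ E(F). Then for every integer s ≥ 2, I_{H_n}^s = Σ_{i+j=s, i,j ≥ 0} I_G^i · I_F^j. -/
open MvPolynomial

noncomputable section

/-- The edge ideal of a finite simple graph on vertex set `Fin n`
(vertex with index `v` corresponds to the vertex `v+1` of `[n]`). -/
def edgeIdeal (K : Type*) [Field K] {n : ℕ} (G : SimpleGraph (Fin n)) :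
    Ideal (MvPolynomial (Fin n) K) :=
  Ideal.span {p | ∃ i j : Fin n, G.Adj i j ∧ p = X i * X j}

/-- `d` is the exponent vector of a minimal monomial generator of `I`. -/
def IsMinGen {K : Type*} [Field K] {n : ℕ} (I : Ideal (MvPolynomial (Fin n) K))
    (d : Fin n →₀ ℕ) : Prop :=
  monomial d (1 : K) ∈ I ∧
    ∀ e : Fin n →₀ ℕ, e ≤ d → e ≠ d → monomial e (1 : K) ∉ I

/-- A list of exponent vectors `L = [d_1, …, d_r]` is a linear quotient ordering if
for every `i ≥ 2` the colon ideal `(x^{d_1}, …, x^{d_{i-1}}) : x^{d_i}` is generated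
by a subset of the variables. -/
def IsLinQuotOrder (K : Type*) [Field K] {n : ℕ} (L : List (Fin n →₀ ℕ)) : Prop :=
  ∀ i : Fin L.length, 0 < i.val →
    ∃ V : Set (Fin n),
      Submodule.colon
        (Ideal.span {m : MvPolynomial (Fin n) K |
          ∃ k : Fin L.length, k.val < i.val ∧ m = monomial (L.get k) 1})
        (Ideal.span {monomial (L.get i) (1 : K)}) =
      Ideal.span ((fun v : Fin n => (X v : MvPolynomial (Fin n) K)) '' V)

/-- A monomial ideal has linear quotients if it is principal or admits a
linear quotient ordering of its minimal monomial generators. -/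
def HasLinearQuotients {K : Type*} [Field K] {n : ℕ}
    (I : Ideal (MvPolynomial (Fin n) K)) : Prop :=
  (∃ p, I = Ideal.span {p}) ∨
    ∃ L : List (Fin n →₀ ℕ), L.Nodup ∧ (∀ d, d ∈ L ↔ IsMinGen I d) ∧ IsLinQuotOrder K L

/-- `lexLt d e` : the monomial `x^d` is lexicographically smaller than `x^e`
for the lexicographic order induced by `x_n > x_{n-1} > … > x_1`. -/
def lexLt {n : ℕ} (d e : Fin n →₀ ℕ) : Prop :=
  ∃ k : Fin n, d k < e k ∧ ∀ m : Fin n, k < m → d m = e m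

/-- `L` lists the minimal monomial generators of `I` in decreasing lexicographic order. -/
def LexDecMinGenOrder {K : Type*} [Field K] {n : ℕ} (I : Ideal (MvPolynomial (Fin n) K))
    (L : List (Fin n →₀ ℕ)) : Prop :=
  List.Pairwise (fun d e => lexLt e d) L ∧ ∀ d, d ∈ L ↔ IsMinGen I d

/-- The anticycle on `[m]` : `{i,j}` is an edge iff `i ≠ j` and `i - j ≢ ±1 (mod m)`. -/
def anticycle (m : ℕ) : SimpleGraph (Fin m) where
  Adj i j := i ≠ j ∧ (i.val + 1) % m ≠ j.val ∧ (j.val + 1) % m ≠ i.val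
  symm := ⟨fun i j h => ⟨h.1.symm, h.2.2, h.2.1⟩⟩
  loopless := ⟨fun i h => h.1 rfl⟩

/-- The anticycle on `[m]` regarded as a graph on the vertex set `[n]`. -/
def anticycleIn (n m : ℕ) : SimpleGraph (Fin n) where
  Adj i j := i ≠ j ∧ i.val < m ∧ j.val < m ∧ (i.val + 1) % m ≠ j.val ∧ (j.val + 1) % m ≠ i.val
  symm := ⟨fun i j h => ⟨h.1.symm, h.2.2.1, h.2.1, h.2.2.2.2, h.2.2.2.1⟩⟩
  loopless := ⟨fun i h => h.1 rfl⟩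

/-- The star on `[n]` with edges `{i, n}` for `1 ≤ i ≤ n - 3`
(in the `0`-indexed picture: edges `{i, n-1}` for `i ≤ n - 4`). -/
def starF (n : ℕ) : SimpleGraph (Fin n) :=
  SimpleGraph.fromRel (fun i j => i.val + 4 ≤ n ∧ j.val = n - 1)

/-- `AgreeOrder n s i j t` : the degree-`s` monomials with ascending (0-indexed)
index sequences `i` and `j` agree in order `t`. -/
def AgreeOrder (n s : ℕ) (i j : ℕ → Fin n) (t : ℕ) : Prop :=
  if t = 0 then j (s - 1) < i (s - 1)
  else (∀ l, s - t ≤ l → l ≤ s - 1 → i l = j l) ∧ i (s - t - 1) ≠ j (s - t - 1)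

theorem add_pow_eq_sum_antidiagonal_of_commute {R : Type*} [IdemSemiring R] {a b : R}
    (h : Commute a b) (n : ℕ) :
    (a + b) ^ n = ∑ p ∈ Finset.HasAntidiagonal.antidiagonal n, a ^ p.1 * b ^ p.2 := by
  rw [h.add_pow']
  refine Finset.sum_congr rfl fun p hp ↦ nsmul_eq_self ?_ _
  exact (Nat.choose_pos (Finset.HasAntidiagonal.antidiagonal.fst_le hp)).ne'

theorem edgeIdeal_sup (K : Type*) [Field K] {n : ℕ} (G F : SimpleGraph (Fin n)) :
    edgeIdeal K (G ⊔ F) = edgeIdeal K G ⊔ edgeIdeal K F := by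
  simp only [edgeIdeal, SimpleGraph.sup_adj, or_and_right, exists_or, Set.ofPred_or,
    Ideal.span_union]

theorem Hn_power_decomposition_general (K : Type*) [Field K] {n : ℕ}
    (G F : SimpleGraph (Fin n)) (s : ℕ) :
    edgeIdeal K (G ⊔ F) ^ s =
      ∑ p ∈ Finset.HasAntidiagonal.antidiagonal s, edgeIdeal K G ^ p.1 * edgeIdeal K F ^ p.2 := by
  rw [edgeIdeal_sup, ← Ideal.add_eq_sup,
    add_pow_eq_sum_antidiagonal_of_commute (Commute.all _ _)]

/-- Remark `rmk2.1`: for `n ≥ 6`, `G = A_{n-1}` the anticycle on `[n-1]`, `F` the star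
on `[n]` with edges `{i, n}` for `1 ≤ i ≤ n-3`, and `H_n` the graph with
`E(H_n) = E(G) ∪ E(F)`, one has `I_{H_n}^s = Σ_{i+j=s} I_G^i I_F^j` for all `s ≥ 2`. -/
theorem Hn_power_decomposition
    (K : Type*) [Field K] (n : ℕ) (hn : 6 ≤ n) (s : ℕ) (hs : 2 ≤ s) :
    edgeIdeal K (anticycleIn n (n - 1) ⊔ starF n) ^ s =
      ∑ p ∈ Finset.HasAntidiagonal.antidiagonal s,
        edgeIdeal K (anticycleIn n (n - 1)) ^ p.1 * edgeIdeal K (starF n) ^ p.2 :=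
  Hn_power_decomposition_general K (anticycleIn n (n - 1)) (starF n) s

end
end

section
/- Fix n ≥ 6 and let F be the star on [n] with edges {i, n} for 1 ≤ i ≤ n−3. Then I_F^2 has linear quotients via the ordering of its minimal monomial generators given by decreasing lexicographic order induced by x_n > x_{n−1} > … > x_1. -/
open MvPolynomial

noncomputable section

/-! An ordering has linear quotients if, whenever a generator `x^e` precedes `x^d`, some generator
preceding `x^d` divides `x_k x^d` for some `k` with `d k < e k`. For the decreasing lexicographic
order, take for `k` the largest index at which `d` and `e` differ. If the exponent vectors have the
exchange property of polymatroidal ideals, then `d + ε_k - ε_t` is one of them for some `t` with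
`e t < d t`; as `d` and `e` agree above `k`, we have `t < k`, so this vector is lexicographically
larger than `d`.

The powers of the edge ideal of a star with centre `z` are polymatroidal, since the generators of
the `s`-th power are `x_z ^ s` times the monomials of degree `s` in the leaves. -/

section MonomialIdeal

variable {σ R : Type*} [CommSemiring R] {S : Set (σ →₀ ℕ)} {d : σ →₀ ℕ}

variable (R) in
/-- The monomial ideal generated by the monomials whose exponent vectors lie in `S`; these need not
be its minimal generators. -/
def monomialIdeal (S : Set (σ →₀ ℕ)) : Ideal (MvPolynomial σ R) :=
  Ideal.span ((monomial · (1 : R)) '' S)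

lemma mem_monomialIdeal {p : MvPolynomial σ R} :
    p ∈ monomialIdeal R S ↔ ∀ m ∈ p.support, ∃ e ∈ S, e ≤ m :=
  mem_ideal_span_monomial_image

lemma monomial_one_mem_monomialIdeal [Nontrivial R] :
    monomial d (1 : R) ∈ monomialIdeal R S ↔ ∃ e ∈ S, e ≤ d := by
  classical
  simp [mem_monomialIdeal, support_monomial]

lemma mem_colon_monomialIdeal {p : MvPolynomial σ R} :
    p ∈ (monomialIdeal R S).colon (Ideal.span {monomial d (1 : R)}) ↔
      ∀ m ∈ p.support, ∃ e ∈ S, e ≤ m + d := by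
  classical
  rw [Ideal.mem_colon_span_singleton, mem_monomialIdeal]
  constructor
  · intro h m hm
    refine h (m + d) ?_
    simpa [mem_support_iff, coeff_mul_monomial] using hm
  · intro h m hm
    obtain ⟨m', hm', d', hd', rfl⟩ := Finset.mem_add.mp (support_mul _ _ hm)
    obtain rfl : d' = d := Finset.mem_singleton.mp (support_monomial_subset hd')
    exact h m' hm'

theorem colon_monomialIdeal_eq_span_X
    (h : ∀ e ∈ S, ∃ k, d k < e k ∧ ∃ f ∈ S, f ≤ d + Finsupp.single k 1) :
    (monomialIdeal R S).colon (Ideal.span {monomial d (1 : R)}) =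
      Ideal.span (X '' {k | ∃ f ∈ S, f ≤ d + Finsupp.single k 1}) := by
  ext p
  rw [mem_colon_monomialIdeal, mem_ideal_span_X_image]
  refine forall₂_congr fun m _ => ⟨?_, ?_⟩
  · rintro ⟨e, he, hem⟩
    obtain ⟨k, hk, hf⟩ := h e he
    have hkm : e k ≤ m k + d k := hem k
    exact ⟨k, hf, by omega⟩
  · rintro ⟨k, ⟨f, hf, hfd⟩, hk⟩
    have hkm : Finsupp.single k 1 ≤ m := Finsupp.single_le_iff.mpr (Nat.one_le_iff_ne_zero.mpr hk)
    exact ⟨f, hf, hfd.trans (by rw [add_comm]; gcongr)⟩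

end MonomialIdeal

lemma isMinGen_monomialIdeal {K : Type*} [Field K] {n : ℕ} {S : Set (Fin n →₀ ℕ)}
    (hS : IsAntichain (· ≤ ·) S) {d : Fin n →₀ ℕ} : IsMinGen (monomialIdeal K S) d ↔ d ∈ S := by
  simp only [IsMinGen, monomial_one_mem_monomialIdeal]
  constructor
  · rintro ⟨⟨e, he, hed⟩, hmin⟩
    by_contra hd
    exact hmin e hed (fun h => hd (h ▸ he)) ⟨e, he, le_rfl⟩
  · refine fun hd => ⟨⟨d, hd, le_rfl⟩, fun e hed hne ⟨f, hf, hfe⟩ => hne ?_⟩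
    obtain rfl : f = d := hS.eq hf hd (hfe.trans hed)
    exact hed.antisymm hfe

section Lex

variable {n : ℕ}

lemma lexLt_iff_toColex_lt {d e : Fin n →₀ ℕ} : lexLt d e ↔ toColex d < toColex e := by
  rw [Finsupp.Colex.lt_iff]
  exact exists_congr fun _ => and_comm

lemma exists_list_pairwise_lexLt {S : Set (Fin n →₀ ℕ)} (hS : S.Finite) :
    ∃ L : List (Fin n →₀ ℕ), L.Pairwise (fun d e => lexLt e d) ∧ ∀ d, d ∈ L ↔ d ∈ S := by
  classical
  refine ⟨((hS.toFinset.image toColex).sort (· ≥ ·)).map ofColex, ?_, by simp⟩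
  rw [List.pairwise_map]
  exact (Finset.sortedGT_sort _).pairwise.imp lexLt_iff_toColex_lt.mpr

lemma lexLt_get_iff_lt {L : List (Fin n →₀ ℕ)} (hL : L.Pairwise (fun d e => lexLt e d))
    {i k : Fin L.length} : lexLt (L.get i) (L.get k) ↔ k < i := by
  have hanti : StrictAnti fun j => toColex (L.get j) := fun j l hjl =>
    lexLt_iff_toColex_lt.mp (List.pairwise_iff_get.mp hL j l hjl)
  rw [lexLt_iff_toColex_lt]
  exact hanti.lt_iff_gt

lemma span_earlier_eq_monomialIdeal (R : Type*) [CommSemiring R] {L : List (Fin n →₀ ℕ)}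
    (hL : L.Pairwise (fun d e => lexLt e d)) (i : Fin L.length) :
    Ideal.span {m : MvPolynomial (Fin n) R |
        ∃ k : Fin L.length, k.val < i.val ∧ m = monomial (L.get k) 1} =
      monomialIdeal R {e | e ∈ L ∧ lexLt (L.get i) e} := by
  rw [monomialIdeal]
  congr 1
  ext m
  constructor
  · rintro ⟨k, hki, rfl⟩
    exact ⟨_, ⟨L.get_mem k, (lexLt_get_iff_lt hL).mpr hki⟩, rfl⟩
  · rintro ⟨e, ⟨heL, hie⟩, rfl⟩
    obtain ⟨k, rfl⟩ := List.get_of_mem heL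
    exact ⟨k, (lexLt_get_iff_lt hL).mp hie, rfl⟩

theorem isLinQuotOrder_of_exists_lexLt_le (K : Type*) [Field K] {L : List (Fin n →₀ ℕ)}
    (hL : L.Pairwise (fun d e => lexLt e d))
    (hex : ∀ d ∈ L, ∀ e ∈ L, lexLt d e →
      ∃ k, d k < e k ∧ ∃ f ∈ L, lexLt d f ∧ f ≤ d + Finsupp.single k 1) :
    IsLinQuotOrder K L := by
  intro i _
  rw [span_earlier_eq_monomialIdeal K hL i]
  refine ⟨_, colon_monomialIdeal_eq_span_X ?_⟩
  rintro e ⟨heL, hie⟩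
  obtain ⟨k, hk, f, hfL, hif, hfk⟩ := hex _ (L.get_mem i) e heL hie
  exact ⟨k, hk, f, ⟨hfL, hif⟩, hfk⟩

end Lex

section Polymatroidal

variable {σ : Type*} {S : Set (σ →₀ ℕ)}

/-- `S` is empty or the set of bases of a discrete polymatroid, so that the monomials with exponent
vectors in `S` generate a polymatroidal ideal. The exchange axiom is taken in its dual form, in
which `e k > d k` yields `d + ε_k - ε_t ∈ S` instead of `e - ε_k + ε_t ∈ S`, and the subtraction is
moved to the other side of the equation. -/
structure IsPolymatroidal (S : Set (σ →₀ ℕ)) : Prop where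
  degree_eq : ∀ ⦃d⦄, d ∈ S → ∀ ⦃e⦄, e ∈ S → d.degree = e.degree
  exchange : ∀ ⦃d⦄, d ∈ S → ∀ ⦃e⦄, e ∈ S → ∀ ⦃k⦄, d k < e k →
    ∃ t, e t < d t ∧ ∃ f ∈ S, f + Finsupp.single t 1 = d + Finsupp.single k 1

lemma eq_of_le_of_degree_eq {d e : σ →₀ ℕ} (hle : d ≤ e) (hdeg : d.degree = e.degree) : d = e := by
  obtain ⟨c, rfl⟩ := exists_add_of_le hle
  have hc : c.degree = 0 := by simpa using hdeg
  rw [(Finsupp.degree_eq_zero_iff c).mp hc, add_zero]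

lemma exists_lt_of_degree_eq {d e : σ →₀ ℕ} (hdeg : d.degree = e.degree) {k : σ} (hk : d k < e k) :
    ∃ t, e t < d t := by
  by_contra! hle
  exact hk.ne (DFunLike.congr_fun (eq_of_le_of_degree_eq hle hdeg) k)

namespace IsPolymatroidal

lemma isAntichain (hS : IsPolymatroidal S) : IsAntichain (· ≤ ·) S :=
  fun _ hd _ he hne hle => hne (eq_of_le_of_degree_eq hle (hS.degree_eq hd he))

lemma finite [Finite σ] (hS : IsPolymatroidal S) : S.Finite := by
  obtain rfl | ⟨d, hd⟩ := S.eq_empty_or_nonempty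
  · exact Set.finite_empty
  · exact (Finsupp.finite_of_degree_eq d.degree).subset fun e he => hS.degree_eq he hd

lemma image_add_right (hS : IsPolymatroidal S) (a : σ →₀ ℕ) :
    IsPolymatroidal ((· + a) '' S) where
  degree_eq := by
    rintro _ ⟨d, hd, rfl⟩ _ ⟨e, he, rfl⟩
    simp [hS.degree_eq hd he]
  exchange := by
    rintro _ ⟨d, hd, rfl⟩ _ ⟨e, he, rfl⟩ k hk
    obtain ⟨t, ht, f, hf, hfd⟩ := hS.exchange hd he (lt_of_add_lt_add_right hk)
    exact ⟨t, Nat.add_lt_add_right ht _, f + a, ⟨f, hf, rfl⟩, by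
      rw [add_right_comm, hfd, add_right_comm]⟩

lemma exists_lexLt_le {n : ℕ} {S : Set (Fin n →₀ ℕ)} (hS : IsPolymatroidal S)
    {d e : Fin n →₀ ℕ} (hd : d ∈ S) (he : e ∈ S) (hde : lexLt d e) :
    ∃ k, d k < e k ∧ ∃ f ∈ S, lexLt d f ∧ f ≤ d + Finsupp.single k 1 := by
  obtain ⟨k, hk, habove⟩ := hde
  obtain ⟨t, ht, f, hf, hfd⟩ := hS.exchange hd he hk
  have htk : t < k := by
    by_contra! hkt
    obtain rfl | hlt := hkt.eq_or_lt
    · exact hk.asymm ht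
    · exact ht.ne' (habove t hlt)
  have hcoord (m : Fin n) : f m + Finsupp.single t 1 m = d m + Finsupp.single k 1 m :=
    DFunLike.congr_fun hfd m
  refine ⟨k, hk, f, hf, ⟨k, ?_, fun m hkm => ?_⟩, le_self_add.trans_eq hfd⟩
  · have hfk : f k = d k + 1 := by simpa [htk.ne'] using hcoord k
    omega
  · simpa [hkm.ne', (htk.trans hkm).ne'] using (hcoord m).symm

theorem exists_lex_isLinQuotOrder (K : Type*) [Field K] {n : ℕ} {S : Set (Fin n →₀ ℕ)}
    (hS : IsPolymatroidal S) :
    ∃ L : List (Fin n →₀ ℕ), LexDecMinGenOrder (monomialIdeal K S) L ∧ IsLinQuotOrder K L := by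
  obtain ⟨L, hL, hmem⟩ := exists_list_pairwise_lexLt hS.finite
  refine ⟨L, ⟨hL, fun d => (hmem d).trans (isMinGen_monomialIdeal hS.isAntichain).symm⟩, ?_⟩
  refine isLinQuotOrder_of_exists_lexLt_le K hL ?_
  simpa only [hmem] using fun d hd e he => hS.exists_lexLt_le hd he

end IsPolymatroidal

/-- Exponent vectors of the monomials of degree `s` in the variables indexed by `A`, that is, of
the generators of the `s`-th power of the monomial prime ideal `(x_i : i ∈ A)`. -/
def exponentsOn (A : Set σ) (s : ℕ) : Set (σ →₀ ℕ) :=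
  {d | d.degree = s ∧ ↑d.support ⊆ A}

lemma isPolymatroidal_exponentsOn (A : Set σ) (s : ℕ) : IsPolymatroidal (exponentsOn A s) where
  degree_eq _ hd _ he := hd.1.trans he.1.symm
  exchange := by
    classical
    rintro d ⟨hd, hdA⟩ e ⟨he, heA⟩ k hk
    obtain ⟨t, ht⟩ := exists_lt_of_degree_eq (hd.trans he.symm) hk
    obtain ⟨c, rfl⟩ : ∃ c, d = c + Finsupp.single t 1 :=
      le_iff_exists_add'.mp (Finsupp.single_le_iff.mpr (Nat.one_le_of_lt ht))
    have hkA : k ∈ A := heA (Finsupp.mem_support_iff.mpr hk.ne_bot)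
    refine ⟨t, ht, c + Finsupp.single k 1, ⟨?_, fun i hi => ?_⟩, add_right_comm _ _ _⟩
    · simpa using hd
    · obtain hi | hi := Finset.mem_union.mp (Finsupp.support_add hi)
      · exact hdA (Finsupp.support_mono le_self_add hi)
      · rwa [Finset.mem_singleton.mp (Finsupp.support_single_subset hi)]

lemma span_X_image_pow (R : Type*) [CommSemiring R] (A : Set σ) (s : ℕ) :
    (Ideal.span (X '' A) : Ideal (MvPolynomial σ R)) ^ s = monomialIdeal R (exponentsOn A s) := by
  rw [Ideal.span, Submodule.span_pow, Finsupp.image_pow_eq_finsuppProd_image]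
  simp [monomialIdeal, exponentsOn, monomial_eq, Ideal.span]

end Polymatroidal

section Star

variable {n : ℕ} {G : SimpleGraph (Fin n)} {z : Fin n}

lemma edgeIdeal_eq_of_star (K : Type*) [Field K] (hG : ∀ ⦃i j⦄, G.Adj i j → i = z ∨ j = z) :
    edgeIdeal K G = Ideal.span (X '' G.neighborSet z) * Ideal.span {X z} := by
  rw [edgeIdeal, Ideal.span_mul_span', Set.mul_singleton, Set.image_image]
  congr 1
  ext p
  constructor
  · rintro ⟨i, j, hij, rfl⟩
    obtain rfl | rfl := hG hij
    · exact ⟨j, hij, mul_comm _ _⟩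
    · exact ⟨i, hij.symm, rfl⟩
  · rintro ⟨i, hi, rfl⟩
    exact ⟨i, z, hi.symm, rfl⟩

lemma edgeIdeal_pow_eq_of_star (K : Type*) [Field K]
    (hG : ∀ ⦃i j⦄, G.Adj i j → i = z ∨ j = z) (s : ℕ) :
    edgeIdeal K G ^ s =
      monomialIdeal K ((· + Finsupp.single z s) '' exponentsOn (G.neighborSet z) s) := by
  rw [edgeIdeal_eq_of_star K hG, mul_pow, span_X_image_pow, Ideal.span_singleton_pow,
    X_pow_eq_monomial, monomialIdeal, monomialIdeal, Ideal.span_mul_span', Set.mul_singleton,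
    Set.image_image, Set.image_image]
  simp only [monomial_mul, one_mul]

theorem star_square_lex_linear_quotients_general (K : Type*) [Field K]
    (hG : ∀ ⦃i j⦄, G.Adj i j → i = z ∨ j = z) (s : ℕ) :
    ∃ L : List (Fin n →₀ ℕ), LexDecMinGenOrder (edgeIdeal K G ^ s) L ∧ IsLinQuotOrder K L := by
  rw [edgeIdeal_pow_eq_of_star K hG]
  exact ((isPolymatroidal_exponentsOn _ s).image_add_right _).exists_lex_isLinQuotOrder K

lemma starF_adj_eq_or_eq (hz : z.val = n - 1) ⦃i j : Fin n⦄ (h : (starF n).Adj i j) :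
    i = z ∨ j = z := by
  simp only [Fin.ext_iff, hz]
  obtain ⟨-, h | h⟩ := h
  · exact Or.inr h.2
  · exact Or.inl h.2

end Star

/-- For `n ≥ 6`, the square `I_F^2` of the edge ideal of the star `F` on `[n]` with
edges `{i, n}`, `1 ≤ i ≤ n-3`, has linear quotients via the ordering of its minimal
generators in decreasing lexicographic order induced by `x_n > x_{n-1} > … > x_1`. -/
theorem star_square_lex_linear_quotients
    (K : Type*) [Field K] (n : ℕ) (hn : 6 ≤ n) :
    ∃ L : List (Fin n →₀ ℕ),
      LexDecMinGenOrder (edgeIdeal K (starF n) ^ 2) L ∧ IsLinQuotOrder K L :=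
  star_square_lex_linear_quotients_general K (z := ⟨n - 1, by omega⟩) (starF_adj_eq_or_eq rfl) 2

end
end
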